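/- Let d be a positive integer, let λ = 9nS²A_max²R_max/(1−γ)², fix an agent i and a state s, and let π be a strategy profile of a finite discounted stochastic game. Suppose that for every action a^i ∈ 𝔸^i there exists a strategy profile π_{a^i} with ‖π − π_{a^i}‖∞ ≤ 1/d and (f(π_{a^i}))^i(s,a^i) ≤ π_{a^i}^i(s,a^i), and moreover (f(π_{a^i}))^j(v,b^j) − π_{a^i}^j(v,b^j) ≥ (f(π_{a^i}))^i(s,a^i) − π_{a^i}^i(s,a^i) for all agents j, states v, and actions b^j. Then ‖f(π) − π‖∞ ≤ A_max²(λ+1)/d. -/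

import Mathlib

/-!
Let `G π = f π - π` be the displacement of Nash's map; each of its rows `G π i s` sums to zero. Two
Bellman equations differ by a change of the joint action law, which the contraction factor `γ` turns
into a Lipschitz estimate for the value functions, hence for `D` and, with some constant `L`, for
`G`. It has to be `G` and not `f`: this leaves `1` as the only term of `L` that does not scale with
`R_max`.

As the row `G π i s` sums to zero, some action `a` has `G π i s a ≥ 0`. At the profile `π_a` this
coordinate is at least `-L δ`, where `δ = ‖π - π_a‖`. Being the minimal coordinate there, it bounds
all of `G π_a` below by `-L δ`, so all of `G π` is at least `-2 L δ`. Zero row sums turn this into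
`|G π| ≤ 2 (A_max - 1) L δ`, which is below the required bound because `2 (m - 1) ≤ m²`.
-/

open Finset

/-- A finite discounted stochastic game with `n` agents, `S` states and
action counts `A i` for each agent `i`. -/
structure SG (n S : ℕ) (A : Fin n → ℕ) where
  P : Fin S → (∀ i, Fin (A i)) → Fin S → ℝ
  r : Fin n → Fin S → (∀ i, Fin (A i)) → ℝ
  Rmax : ℝ
  γ : ℝ
  P_nonneg : ∀ s a s', 0 ≤ P s a s'
  P_sum_one : ∀ s a, ∑ s', P s a s' = 1
  r_nonneg : ∀ i s a, 0 ≤ r i s a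
  r_le_Rmax : ∀ i s a, r i s a ≤ Rmax
  γ_nonneg : 0 ≤ γ
  γ_lt_one : γ < 1

namespace SG

variable {n S : ℕ} {A : Fin n → ℕ}

/-- A (behavioral) strategy profile: agent `i` plays at state `s` the distribution
`π i s` on its actions. -/
abbrev Profile (n S : ℕ) (A : Fin n → ℕ) := ∀ i : Fin n, Fin S → Fin (A i) → ℝ

/-- `π` is a genuine strategy profile: each `π i s` is a probability distribution. -/
def IsProfile (π : Profile n S A) : Prop :=
  (∀ i s a, 0 ≤ π i s a) ∧ ∀ i s, ∑ a, π i s a = 1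

/-- `A_max`, the largest number of actions of any agent. -/
def Amax (A : Fin n → ℕ) : ℕ := Finset.univ.sup A

/-- Probability of the joint action `a` at state `s` under profile `π`. -/
def jointProb (π : Profile n S A) (s : Fin S) (a : ∀ i, Fin (A i)) : ℝ :=
  ∏ i, π i s (a i)

/-- The state-transition matrix `P^π` induced by the profile `π`. -/
noncomputable def Pmat (g : SG n S A) (π : Profile n S A) : Matrix (Fin S) (Fin S) ℝ :=
  fun s s' => ∑ a, jointProb π s a * g.P s a s'

/-- Expected one-step reward `r^{i,π}(s)` of agent `i` at state `s` under `π`. -/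
noncomputable def rvec (g : SG n S A) (π : Profile n S A) (i : Fin n) (s : Fin S) : ℝ :=
  ∑ a, jointProb π s a * g.r i s a

/-- The value function `V^{π^i,π^{-i}}` of agent `i` under profile `π`: the unique
solution of the Bellman equation `V = r^{i,π} + γ P^π V`, i.e. `(I − γP^π)⁻¹ r^{i,π}`. -/
noncomputable def V (g : SG n S A) (π : Profile n S A) (i : Fin n) : Fin S → ℝ :=
  Matrix.mulVec (1 - g.γ • g.Pmat π)⁻¹ (g.rvec π i)

/-- The profile obtained from `π` by letting agent `i` play the pure action `a`
at state `s` (and `π i` at every other state). -/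
def devProfile (π : Profile n S A) (i : Fin n) (s : Fin S) (a : Fin (A i)) : Profile n S A :=
  Function.update π i (fun t b => if t = s then (if b = a then (1 : ℝ) else 0) else π i t b)

/-- The one-step-deviation value `V^{π^i,π^{-i}}_{π^i(s,a)=1}(s)`. -/
noncomputable def Vdev (g : SG n S A) (π : Profile n S A) (i : Fin n) (s : Fin S)
    (a : Fin (A i)) : ℝ :=
  g.V (devProfile π i s a) i s

/-- `D^{π}_{a}(s) = max(0, V^{π^i,π^{-i}}_{π^i(s,a)=1}(s) − V^{π^i,π^{-i}}(s))`. -/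
noncomputable def D (g : SG n S A) (π : Profile n S A) (i : Fin n) (s : Fin S)
    (a : Fin (A i)) : ℝ :=
  max 0 (g.Vdev π i s a - g.V π i s)

/-- Nash's improvement map `f` on strategy profiles. -/
noncomputable def f (g : SG n S A) (π : Profile n S A) : Profile n S A :=
  fun i s a => (π i s a + g.D π i s a) / (1 + ∑ b, g.D π i s b)

/-- `π` is a Markov perfect equilibrium: no agent can improve its value at any state
by unilaterally switching to another behavioral strategy. -/
def IsMPE (g : SG n S A) (π : Profile n S A) : Prop :=
  ∀ (s : Fin S) (i : Fin n) (σ : Fin S → Fin (A i) → ℝ),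
    ((∀ t b, 0 ≤ σ t b) ∧ ∀ t, ∑ b, σ t b = 1) →
    g.V (Function.update π i σ) i s ≤ g.V π i s

/-- `π` is an `ε`-approximate Markov perfect equilibrium. -/
def IsApproxMPE (g : SG n S A) (π : Profile n S A) (ε : ℝ) : Prop :=
  ∀ (s : Fin S) (i : Fin n) (σ : Fin S → Fin (A i) → ℝ),
    ((∀ t b, 0 ≤ σ t b) ∧ ∀ t, ∑ b, σ t b = 1) →
    g.V (Function.update π i σ) i s - ε ≤ g.V π i s

end SG

section StdSimplex

variable {ι : Type*} [Fintype ι]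

lemma abs_sum_mul_le {w x : ι → ℝ} {c : ℝ} (hx : ∀ a, |x a| ≤ c) :
    |∑ a, w a * x a| ≤ (∑ a, |w a|) * c :=
  calc |∑ a, w a * x a| ≤ ∑ a, |w a * x a| := abs_sum_le_sum_abs _ _
    _ = ∑ a, |w a| * |x a| := by simp only [abs_mul]
    _ ≤ ∑ a, |w a| * c := by gcongr with a; exact hx a
    _ = (∑ a, |w a|) * c := by rw [sum_mul]

lemma sum_abs_eq_one_of_mem_stdSimplex {w : ι → ℝ} (hw : w ∈ stdSimplex ℝ ι) :
    ∑ a, |w a| = 1 := by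
  simp only [abs_of_nonneg (hw.1 _), hw.2]

lemma abs_sum_mul_le_of_mem_stdSimplex {w x : ι → ℝ} {c : ℝ} (hw : w ∈ stdSimplex ℝ ι)
    (hx : ∀ a, |x a| ≤ c) : |∑ a, w a * x a| ≤ c := by
  simpa [sum_abs_eq_one_of_mem_stdSimplex hw] using abs_sum_mul_le (w := w) hx

lemma abs_le_of_sum_eq_zero_of_neg_le {x : ι → ℝ} {c : ℝ} (hsum : ∑ b, x b = 0)
    (hx : ∀ b, -c ≤ x b) (a : ι) : |x a| ≤ (Fintype.card ι - 1) * c := by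
  have hupper : x a + c ≤ Fintype.card ι * c :=
    calc x a + c ≤ ∑ b, (x b + c) :=
          single_le_sum (f := fun b ↦ x b + c) (fun b _ ↦ by linarith [hx b]) (mem_univ a)
      _ = Fintype.card ι * c := by simp [sum_add_distrib, hsum]
  refine abs_le.2 ⟨?_, by linarith [hupper]⟩
  rcases subsingleton_or_nontrivial ι with _ | hι
  · have hxa : x a = 0 := by rw [← hsum, Fintype.sum_subsingleton _ a]
    linarith [hupper]
  · have hcard : (2 : ℝ) ≤ Fintype.card ι := by exact_mod_cast Fintype.one_lt_card
    nlinarith [hx a, hupper]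

end StdSimplex

lemma abs_add_div_one_add_sub_sub_le {p p' x x' X X' : ℝ} (hX : 0 ≤ X) (hx' : 0 ≤ x')
    (hxX' : x' ≤ X') (hp' : 0 ≤ p') (hp'1 : p' ≤ 1) :
    |((p + x) / (1 + X) - p) - ((p' + x') / (1 + X') - p')| ≤
      |p - p'| + |x - x'| + |X - X'| := by
  have hX' : 0 ≤ X' := hx'.trans hxX'
  set q := (p' + x') / (1 + X') with hq
  have hq0 : 0 ≤ q := by positivity
  have hq1 : q ≤ 1 := by rw [hq, div_le_one (by positivity)]; linarith
  -- Subtracting `p` leaves `(p - p') * X` in the numerator, which the denominator `1 + X` absorbs.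
  have hdiff : (p + x) / (1 + X) - p - (q - p') =
      ((x - x') - (p - p') * X - q * (X - X')) / (1 + X) := by
    rw [hq]
    field_simp
    ring
  rw [hdiff, abs_div, abs_of_pos (by positivity : 0 < 1 + X), div_le_iff₀ (by positivity)]
  calc |(x - x') - (p - p') * X - q * (X - X')|
      ≤ |x - x'| + |(p - p') * X| + |q * (X - X')| :=
        (abs_sub _ _).trans (add_le_add_left (abs_sub _ _) _)
    _ = |x - x'| + |p - p'| * X + q * |X - X'| := by
        rw [abs_mul, abs_mul, abs_of_nonneg hX, abs_of_nonneg hq0]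
    _ ≤ (|p - p'| + |x - x'| + |X - X'|) * (1 + X) := by
        have hqX : q * |X - X'| ≤ |X - X'| := mul_le_of_le_one_left (abs_nonneg _) hq1
        nlinarith [abs_nonneg (p - p'), mul_nonneg (abs_nonneg (x - x')) hX,
          mul_nonneg (abs_nonneg (X - X')) hX]

section ProductWeights

variable {ι : Type*} [Fintype ι] {α : ι → Type*}

/-- The joint weight of a product of weighted finite types, as a multilinear function of the
weights. All weights carry the `ℓ¹` norm, for which this map is multiplicative, so that the
Lipschitz estimates for bounded multilinear maps apply to products of distributions. -/
noncomputable def productWeights :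
    MultilinearMap ℝ (fun i ↦ PiLp 1 fun _ : α i ↦ ℝ) (PiLp 1 fun _ : ∀ i, α i ↦ ℝ) :=
  (WithLp.linearEquiv 1 ℝ ((∀ i, α i) → ℝ)).symm.toLinearMap.compMultilinearMap <|
    MultilinearMap.pi fun a ↦ (MultilinearMap.mkPiAlgebra ℝ ι ℝ).compLinearMap fun i ↦
      PiLp.projₗ 1 (fun _ : α i ↦ ℝ) (a i)

lemma productWeights_apply (p : ∀ i, PiLp 1 fun _ : α i ↦ ℝ) (a : ∀ i, α i) :
    productWeights p a = ∏ i, p i (a i) := by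
  simp [productWeights]

variable [DecidableEq ι] [∀ i, Fintype (α i)]

lemma norm_productWeights (p : ∀ i, PiLp 1 fun _ : α i ↦ ℝ) :
    ‖productWeights p‖ = ∏ i, ‖p i‖ := by
  simp only [PiLp.norm_eq_of_L1, productWeights_apply, norm_prod, Fintype.prod_sum]

lemma sum_abs_prod_sub_prod_le {p q : ∀ i, α i → ℝ} (hp : ∀ i, ∑ b, |p i b| ≤ 1)
    (hq : ∀ i, ∑ b, |q i b| ≤ 1) :
    ∑ a : ∀ i, α i, |∏ i, p i (a i) - ∏ i, q i (a i)| ≤ ∑ i, ∑ b, |p i b - q i b| := by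
  have hbound := productWeights.norm_image_sub_le_of_bound' zero_le_one
    (fun m ↦ by rw [norm_productWeights, one_mul])
    (fun i ↦ WithLp.toLp 1 (p i)) (fun i ↦ WithLp.toLp 1 (q i))
  simp only [PiLp.norm_eq_of_L1, PiLp.sub_apply, productWeights_apply, Real.norm_eq_abs,
    one_mul] at hbound
  refine hbound.trans (sum_le_sum fun i _ ↦ ?_)
  rw [← mul_prod_erase _ _ (mem_univ i), if_pos rfl]
  refine mul_le_of_le_one_right (by positivity) (prod_le_one (fun j _ ↦ ?_) fun j hj ↦ ?_)
  · positivity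
  · rw [if_neg (ne_of_mem_erase hj)]
    exact max_le (hp j) (hq j)

lemma prod_mem_stdSimplex {p : ∀ i, α i → ℝ} (hp : ∀ i, p i ∈ stdSimplex ℝ (α i)) :
    (fun a : ∀ i, α i ↦ ∏ i, p i (a i)) ∈ stdSimplex ℝ (∀ i, α i) :=
  ⟨fun a ↦ prod_nonneg fun i _ ↦ (hp i).1 (a i), by
    rw [← Fintype.prod_sum]; exact prod_eq_one fun i _ ↦ (hp i).2⟩

end ProductWeights

section DiscountedResolvent

variable {σ : Type*} [Fintype σ] [DecidableEq σ] {M : Matrix σ σ ℝ} {γ : ℝ}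

open Matrix

lemma norm_mulVec_le_of_mem_rowStochastic (hM : M ∈ rowStochastic ℝ σ) (x : σ → ℝ) :
    ‖M *ᵥ x‖ ≤ ‖x‖ :=
  (pi_norm_le_iff_of_nonneg (norm_nonneg x)).2 fun s ↦
    abs_sum_mul_le_of_mem_stdSimplex
      ⟨fun _ ↦ nonneg_of_mem_rowStochastic hM, sum_row_of_mem_rowStochastic hM s⟩
      (norm_le_pi_norm x)

lemma one_sub_mul_norm_le_of_mem_rowStochastic (hM : M ∈ rowStochastic ℝ σ) (hγ : 0 ≤ γ)
    (x : σ → ℝ) : (1 - γ) * ‖x‖ ≤ ‖(1 - γ • M) *ᵥ x‖ := by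
  have hx : x = (1 - γ • M) *ᵥ x + γ • (M *ᵥ x) := by
    rw [sub_mulVec, one_mulVec, smul_mulVec, sub_add_cancel]
  have htriangle : ‖x‖ ≤ ‖(1 - γ • M) *ᵥ x‖ + γ * ‖x‖ :=
    calc ‖x‖ ≤ ‖(1 - γ • M) *ᵥ x‖ + ‖γ • (M *ᵥ x)‖ := by
          conv_lhs => rw [hx]
          exact norm_add_le _ _
      _ ≤ ‖(1 - γ • M) *ᵥ x‖ + γ * ‖x‖ := by
          rw [norm_smul, Real.norm_of_nonneg hγ]
          gcongr
          exact norm_mulVec_le_of_mem_rowStochastic hM x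
  linarith

lemma isUnit_one_sub_smul_of_mem_rowStochastic (hM : M ∈ rowStochastic ℝ σ) (hγ : 0 ≤ γ)
    (hγ1 : γ < 1) : IsUnit (1 - γ • M) := by
  refine mulVec_injective_iff_isUnit.1 fun x y hxy ↦ sub_eq_zero.1 (norm_le_zero_iff.1 ?_)
  have hle := one_sub_mul_norm_le_of_mem_rowStochastic hM hγ (x - y)
  rw [mulVec_sub, sub_eq_zero.2 hxy, norm_zero] at hle
  exact nonpos_of_mul_nonpos_right hle (sub_pos.2 hγ1)

end DiscountedResolvent

namespace SG

variable {n S : ℕ} {A : Fin n → ℕ} {π π' : Profile n S A}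

section Profile

lemma norm_profile_le_iff {c : ℝ} (hc : 0 ≤ c) :
    ‖π‖ ≤ c ↔ ∀ j v b, |π j v b| ≤ c := by
  simp only [pi_norm_le_iff_of_nonneg hc, Real.norm_eq_abs]

lemma abs_apply_le_norm_profile (π : Profile n S A) (j : Fin n) (v : Fin S) (b : Fin (A j)) :
    |π j v b| ≤ ‖π‖ :=
  (norm_profile_le_iff (norm_nonneg π)).1 le_rfl j v b

lemma card_le_Amax (A : Fin n → ℕ) (i : Fin n) : A i ≤ Amax A :=
  le_sup (mem_univ i)

namespace IsProfile

lemma mem_stdSimplex (hπ : IsProfile π) (i : Fin n) (s : Fin S) :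
    π i s ∈ stdSimplex ℝ (Fin (A i)) :=
  ⟨hπ.1 i s, hπ.2 i s⟩

lemma nonempty_action (hπ : IsProfile π) (i : Fin n) (s : Fin S) : Nonempty (Fin (A i)) := by
  by_contra hempty
  rw [not_nonempty_iff] at hempty
  simpa using hπ.2 i s

lemma one_le_Amax (hπ : IsProfile π) (i : Fin n) (s : Fin S) : 1 ≤ Amax A :=
  (Fin.pos_iff_nonempty.2 (hπ.nonempty_action i s)).trans_le (card_le_Amax A i)

lemma jointProb_mem_stdSimplex (hπ : IsProfile π) (s : Fin S) :
    jointProb π s ∈ stdSimplex ℝ (∀ i, Fin (A i)) :=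
  prod_mem_stdSimplex fun i ↦ hπ.mem_stdSimplex i s

lemma sum_abs_jointProb_sub_le (hπ : IsProfile π) (hπ' : IsProfile π') (s : Fin S) :
    ∑ a, |jointProb π s a - jointProb π' s a| ≤ n * Amax A * ‖π - π'‖ :=
  calc ∑ a, |jointProb π s a - jointProb π' s a|
      ≤ ∑ i, ∑ b, |π i s b - π' i s b| :=
        sum_abs_prod_sub_prod_le
          (fun i ↦ (sum_abs_eq_one_of_mem_stdSimplex (hπ.mem_stdSimplex i s)).le)
          (fun i ↦ (sum_abs_eq_one_of_mem_stdSimplex (hπ'.mem_stdSimplex i s)).le)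
    _ ≤ ∑ i : Fin n, ∑ _b : Fin (A i), ‖π - π'‖ := by
        gcongr with i _ b
        exact abs_apply_le_norm_profile (π - π') i s b
    _ = ∑ i : Fin n, A i * ‖π - π'‖ := by simp
    _ ≤ ∑ _i : Fin n, Amax A * ‖π - π'‖ := by
        gcongr with i
        exact card_le_Amax A i
    _ = n * Amax A * ‖π - π'‖ := by simp [mul_assoc]

lemma devProfile (hπ : IsProfile π) (i : Fin n) (s : Fin S) (a : Fin (A i)) :
    IsProfile (devProfile π i s a) := by
  suffices hrow : ∀ j t, SG.devProfile π i s a j t ∈ stdSimplex ℝ (Fin (A j)) from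
    ⟨fun j t ↦ (hrow j t).1, fun j t ↦ (hrow j t).2⟩
  intro j t
  rcases eq_or_ne j i with rfl | hj
  · by_cases ht : t = s
    · simpa [SG.devProfile, ht, ← Pi.single_apply] using single_mem_stdSimplex ℝ a
    · simpa [SG.devProfile, ht] using hπ.mem_stdSimplex j t
  · simpa [SG.devProfile, hj] using hπ.mem_stdSimplex j t

end IsProfile

lemma norm_devProfile_sub_le (π π' : Profile n S A) (i : Fin n) (s : Fin S) (a : Fin (A i)) :
    ‖devProfile π i s a - devProfile π' i s a‖ ≤ ‖π - π'‖ := by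
  refine (norm_profile_le_iff (norm_nonneg _)).2 fun j v b ↦ ?_
  refine le_trans ?_ (abs_apply_le_norm_profile (π - π') j v b)
  rcases eq_or_ne j i with rfl | hj
  · by_cases hv : v = s <;> simp [devProfile, hv]
  · simp [devProfile, hj]

end Profile

section Value

open Matrix

lemma one_sub_γ_pos (g : SG n S A) : 0 < 1 - g.γ :=
  sub_pos.2 g.γ_lt_one

lemma abs_r_le (g : SG n S A) (i : Fin n) (s : Fin S) (a : ∀ i, Fin (A i)) :
    |g.r i s a| ≤ g.Rmax :=
  (abs_of_nonneg (g.r_nonneg i s a)).trans_le (g.r_le_Rmax i s a)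

lemma Rmax_nonneg (g : SG n S A) (hπ : IsProfile π) (i : Fin n) (s : Fin S) : 0 ≤ g.Rmax :=
  (abs_nonneg _).trans (g.abs_r_le i s fun j ↦ (hπ.nonempty_action j s).some)

lemma Pmat_mem_rowStochastic (g : SG n S A) (hπ : IsProfile π) :
    g.Pmat π ∈ rowStochastic ℝ (Fin S) := by
  refine mem_rowStochastic_iff_sum.2 ⟨fun s s' ↦ ?_, fun s ↦ ?_⟩
  · exact sum_nonneg fun a _ ↦
      mul_nonneg ((hπ.jointProb_mem_stdSimplex s).1 a) (g.P_nonneg s a s')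
  · simp only [Pmat]
    rw [sum_comm]
    simp only [← mul_sum, g.P_sum_one, mul_one, (hπ.jointProb_mem_stdSimplex s).2]

/-- The value `Q^i(s, a)` of the joint action `a` at the state `s` for agent `i`, when the
continuation from the next state on is worth `W`. -/
noncomputable def actionValue (g : SG n S A) (W : Fin S → ℝ) (i : Fin n) (s : Fin S)
    (a : ∀ i, Fin (A i)) : ℝ :=
  g.r i s a + g.γ * ∑ s', g.P s a s' * W s'

lemma sum_jointProb_mul_actionValue (g : SG n S A) (π : Profile n S A) (W : Fin S → ℝ)
    (i : Fin n) (s : Fin S) :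
    ∑ a, jointProb π s a * g.actionValue W i s a =
      g.rvec π i s + g.γ * (g.Pmat π *ᵥ W) s := by
  simp only [actionValue, rvec, Pmat, mulVec, dotProduct, mul_add, sum_add_distrib, sum_mul,
    mul_sum]
  rw [add_right_inj, sum_comm]
  exact sum_congr rfl fun s' _ ↦ sum_congr rfl fun a _ ↦ by ring

lemma mulVec_V (g : SG n S A) (hπ : IsProfile π) (i : Fin n) :
    (1 - g.γ • g.Pmat π) *ᵥ g.V π i = g.rvec π i := by
  have hunit := isUnit_one_sub_smul_of_mem_rowStochastic (g.Pmat_mem_rowStochastic hπ)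
    g.γ_nonneg g.γ_lt_one
  rw [V, mulVec_mulVec, mul_nonsing_inv _ ((isUnit_iff_isUnit_det _).1 hunit), one_mulVec]

lemma V_eq_sum_actionValue (g : SG n S A) (hπ : IsProfile π) (i : Fin n) (s : Fin S) :
    g.V π i s = ∑ a, jointProb π s a * g.actionValue (g.V π i) i s a := by
  rw [sum_jointProb_mul_actionValue, ← g.mulVec_V hπ i, sub_mulVec, one_mulVec, smul_mulVec]
  simp

lemma norm_V_le (g : SG n S A) (hπ : IsProfile π) (i : Fin n) (s : Fin S) :
    ‖g.V π i‖ ≤ g.Rmax / (1 - g.γ) := by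
  rw [le_div_iff₀' g.one_sub_γ_pos]
  calc (1 - g.γ) * ‖g.V π i‖ ≤ ‖(1 - g.γ • g.Pmat π) *ᵥ g.V π i‖ :=
        one_sub_mul_norm_le_of_mem_rowStochastic (g.Pmat_mem_rowStochastic hπ) g.γ_nonneg _
    _ = ‖g.rvec π i‖ := by rw [g.mulVec_V hπ]
    _ ≤ g.Rmax := (pi_norm_le_iff_of_nonneg (g.Rmax_nonneg hπ i s)).2 fun t ↦
        abs_sum_mul_le_of_mem_stdSimplex (hπ.jointProb_mem_stdSimplex t) (g.abs_r_le i t)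

lemma abs_actionValue_V_le (g : SG n S A) (hπ : IsProfile π) (i : Fin n) (s : Fin S)
    (a : ∀ i, Fin (A i)) : |g.actionValue (g.V π i) i s a| ≤ g.Rmax / (1 - g.γ) := by
  have hcont : |∑ s', g.P s a s' * g.V π i s'| ≤ g.Rmax / (1 - g.γ) :=
    abs_sum_mul_le_of_mem_stdSimplex ⟨g.P_nonneg s a, g.P_sum_one s a⟩ fun s' ↦
      (norm_le_pi_norm _ s').trans (g.norm_V_le hπ i s)
  calc |g.actionValue (g.V π i) i s a|
      ≤ |g.r i s a| + g.γ * |∑ s', g.P s a s' * g.V π i s'| := by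
        simpa only [actionValue, abs_mul, abs_of_nonneg g.γ_nonneg] using
          abs_add_le (g.r i s a) (g.γ * ∑ s', g.P s a s' * g.V π i s')
    _ ≤ g.Rmax + g.γ * (g.Rmax / (1 - g.γ)) :=
        add_le_add (g.abs_r_le i s a) (mul_le_mul_of_nonneg_left hcont g.γ_nonneg)
    _ = g.Rmax / (1 - g.γ) := by
        field_simp [g.one_sub_γ_pos.ne']
        ring

lemma mulVec_V_sub_V (g : SG n S A) (hπ : IsProfile π) (hπ' : IsProfile π') (i : Fin n)
    (s : Fin S) :
    ((1 - g.γ • g.Pmat π) *ᵥ (g.V π i - g.V π' i)) s =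
      ∑ a, (jointProb π s a - jointProb π' s a) * g.actionValue (g.V π' i) i s a := by
  have hV' := g.V_eq_sum_actionValue hπ' i s
  simp only [sub_mul, sum_sub_distrib]
  rw [← hV', sum_jointProb_mul_actionValue, mulVec_sub, g.mulVec_V hπ, sub_mulVec, one_mulVec,
    smul_mulVec]
  simp only [Pi.sub_apply, Pi.smul_apply, smul_eq_mul]
  ring

lemma norm_V_sub_V_le (g : SG n S A) (hπ : IsProfile π) (hπ' : IsProfile π') (i : Fin n)
    (s : Fin S) :
    ‖g.V π i - g.V π' i‖ ≤ n * Amax A * g.Rmax / (1 - g.γ) ^ 2 * ‖π - π'‖ := by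
  have hγ := g.one_sub_γ_pos
  have hR := g.Rmax_nonneg hπ i s
  suffices hmul : (1 - g.γ) * ‖g.V π i - g.V π' i‖ ≤
      n * Amax A * ‖π - π'‖ * (g.Rmax / (1 - g.γ)) by
    rw [← le_div_iff₀' hγ] at hmul
    exact hmul.trans_eq (by field_simp)
  refine (one_sub_mul_norm_le_of_mem_rowStochastic (g.Pmat_mem_rowStochastic hπ) g.γ_nonneg
    _).trans ((pi_norm_le_iff_of_nonneg (by positivity)).2 fun t ↦ ?_)
  rw [g.mulVec_V_sub_V hπ hπ', Real.norm_eq_abs]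
  exact (abs_sum_mul_le (g.abs_actionValue_V_le hπ' i t)).trans
    (mul_le_mul_of_nonneg_right (hπ.sum_abs_jointProb_sub_le hπ' t) (by positivity))

lemma abs_V_sub_V_le (g : SG n S A) (hπ : IsProfile π) (hπ' : IsProfile π') (i : Fin n)
    (s : Fin S) :
    |g.V π i s - g.V π' i s| ≤ n * Amax A * g.Rmax / (1 - g.γ) ^ 2 * ‖π - π'‖ :=
  (norm_le_pi_norm (g.V π i - g.V π' i) s).trans (g.norm_V_sub_V_le hπ hπ' i s)

end Value

section Displacement

lemma D_nonneg (g : SG n S A) (π : Profile n S A) (i : Fin n) (s : Fin S) (a : Fin (A i)) :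
    0 ≤ g.D π i s a :=
  le_max_left _ _

lemma abs_D_sub_D_le (g : SG n S A) (hπ : IsProfile π) (hπ' : IsProfile π') (i : Fin n)
    (s : Fin S) (a : Fin (A i)) :
    |g.D π i s a - g.D π' i s a| ≤
      2 * (n * Amax A * g.Rmax / (1 - g.γ) ^ 2) * ‖π - π'‖ := by
  have hR := g.Rmax_nonneg hπ i s
  set K : ℝ := n * Amax A * g.Rmax / (1 - g.γ) ^ 2
  have hK : 0 ≤ K := by positivity
  have hdev : |g.Vdev π i s a - g.Vdev π' i s a| ≤ K * ‖π - π'‖ :=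
    (g.abs_V_sub_V_le (hπ.devProfile i s a) (hπ'.devProfile i s a) i s).trans
      (mul_le_mul_of_nonneg_left (norm_devProfile_sub_le π π' i s a) hK)
  calc |g.D π i s a - g.D π' i s a|
      ≤ |(g.Vdev π i s a - g.V π i s) - (g.Vdev π' i s a - g.V π' i s)| := by
        rw [D, D, max_comm 0, max_comm 0]
        exact abs_max_sub_max_le_abs _ _ 0
    _ = |(g.Vdev π i s a - g.Vdev π' i s a) - (g.V π i s - g.V π' i s)| := by ring_nf
    _ ≤ |g.Vdev π i s a - g.Vdev π' i s a| + |g.V π i s - g.V π' i s| := abs_sub _ _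
    _ ≤ K * ‖π - π'‖ + K * ‖π - π'‖ := add_le_add hdev (g.abs_V_sub_V_le hπ hπ' i s)
    _ = 2 * K * ‖π - π'‖ := by ring

lemma sum_f_sub (g : SG n S A) (hπ : IsProfile π) (i : Fin n) (s : Fin S) :
    ∑ a, (g.f π i s a - π i s a) = 0 := by
  have hD : 0 ≤ ∑ b, g.D π i s b := sum_nonneg fun b _ ↦ g.D_nonneg π i s b
  simp only [f, sum_sub_distrib, ← sum_div, sum_add_distrib, hπ.2]
  rw [div_self (by positivity), sub_self]

lemma exists_le_f (g : SG n S A) (hπ : IsProfile π) (i : Fin n) (s : Fin S) :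
    ∃ a, π i s a ≤ g.f π i s a := by
  have := hπ.nonempty_action i s
  have hsum : ∑ a, π i s a ≤ ∑ a, g.f π i s a :=
    (sub_eq_zero.1 ((sum_sub_distrib ..).symm.trans (g.sum_f_sub hπ i s))).ge
  simpa using exists_le_of_sum_le univ_nonempty hsum

/-- A Lipschitz constant, for the sup norm on genuine profiles, of the displacement
`π ↦ g.f π - π` of Nash's map. -/
noncomputable def displacementLip (g : SG n S A) : ℝ :=
  2 * (Amax A + 1) * (n * Amax A * g.Rmax / (1 - g.γ) ^ 2) + 1

lemma abs_displacement_sub_le (g : SG n S A) (hπ : IsProfile π) (hπ' : IsProfile π')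
    (i : Fin n) (s : Fin S) (a : Fin (A i)) :
    |(g.f π i s a - π i s a) - (g.f π' i s a - π' i s a)| ≤
      g.displacementLip * ‖π - π'‖ := by
  have hR := g.Rmax_nonneg hπ i s
  have hD := g.abs_D_sub_D_le hπ hπ' i s
  rw [displacementLip]
  set K : ℝ := n * Amax A * g.Rmax / (1 - g.γ) ^ 2
  have hsum : |∑ b, g.D π i s b - ∑ b, g.D π' i s b| ≤ Amax A * (2 * K * ‖π - π'‖) :=
    calc |∑ b, g.D π i s b - ∑ b, g.D π' i s b|
        ≤ ∑ b, |g.D π i s b - g.D π' i s b| := by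
          rw [← sum_sub_distrib]
          exact abs_sum_le_sum_abs _ _
      _ ≤ ∑ _b : Fin (A i), 2 * K * ‖π - π'‖ := sum_le_sum fun b _ ↦ hD b
      _ = A i * (2 * K * ‖π - π'‖) := by simp
      _ ≤ Amax A * (2 * K * ‖π - π'‖) := by
          gcongr
          exact card_le_Amax A i
  calc |(g.f π i s a - π i s a) - (g.f π' i s a - π' i s a)|
      ≤ |π i s a - π' i s a| + |g.D π i s a - g.D π' i s a| +
          |∑ b, g.D π i s b - ∑ b, g.D π' i s b| :=
        abs_add_div_one_add_sub_sub_le (sum_nonneg fun b _ ↦ g.D_nonneg π i s b)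
          (g.D_nonneg π' i s a)
          (single_le_sum (fun b _ ↦ g.D_nonneg π' i s b) (mem_univ a))
          (hπ'.1 i s a)
          ((single_le_sum (fun b _ ↦ hπ'.1 i s b) (mem_univ a)).trans_eq (hπ'.2 i s))
    _ ≤ ‖π - π'‖ + 2 * K * ‖π - π'‖ + Amax A * (2 * K * ‖π - π'‖) := by
        gcongr
        exacts [abs_apply_le_norm_profile (π - π') i s a, hD a]
    _ = (2 * (Amax A + 1) * K + 1) * ‖π - π'‖ := by ring

lemma displacementLip_nonneg (g : SG n S A) (hπ : IsProfile π) (i : Fin n) (s : Fin S) :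
    0 ≤ g.displacementLip := by
  have hR := g.Rmax_nonneg hπ i s
  rw [displacementLip]
  positivity

lemma displacementLip_le (g : SG n S A) (hπ : IsProfile π) (i : Fin n) (s : Fin S) :
    g.displacementLip ≤
      9 * (n : ℝ) * (S : ℝ) ^ 2 * (Amax A : ℝ) ^ 2 * g.Rmax / (1 - g.γ) ^ 2 + 1 := by
  have hR := g.Rmax_nonneg hπ i s
  have hm : (1 : ℝ) ≤ Amax A := by exact_mod_cast hπ.one_le_Amax i s
  have hS : (1 : ℝ) ≤ (S : ℝ) ^ 2 := one_le_pow₀ (by exact_mod_cast s.pos)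
  have hcoeff : 2 * ((Amax A : ℝ) + 1) ≤ 9 * (S : ℝ) ^ 2 * Amax A := by nlinarith
  calc g.displacementLip
      ≤ 9 * (S : ℝ) ^ 2 * Amax A * (n * Amax A * g.Rmax / (1 - g.γ) ^ 2) + 1 := by
        rw [displacementLip]
        gcongr
    _ = _ := by ring

lemma norm_displacement_le_of_minimal (g : SG n S A) (hπ : IsProfile π) (hπ' : IsProfile π')
    {i : Fin n} {s : Fin S} {a : Fin (A i)} (hinc : π i s a ≤ g.f π i s a)
    (hmin : ∀ j v b, g.f π' i s a - π' i s a ≤ g.f π' j v b - π' j v b) :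
    ‖g.f π - π‖ ≤ 2 * (Amax A - 1) * g.displacementLip * ‖π - π'‖ := by
  have hL := g.displacementLip_nonneg hπ i s
  have hm : (1 : ℝ) ≤ Amax A := by exact_mod_cast hπ.one_le_Amax i s
  set c := g.displacementLip * ‖π - π'‖
  have hlower (j v b) : -(2 * c) ≤ g.f π j v b - π j v b := by
    have hsource := (abs_le.1 (g.abs_displacement_sub_le hπ hπ' i s a)).2
    have htarget := (abs_le.1 (g.abs_displacement_sub_le hπ hπ' j v b)).1
    linarith [hmin j v b]
  refine (norm_profile_le_iff (by positivity)).2 fun j v b ↦ ?_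
  calc |g.f π j v b - π j v b|
      ≤ (Fintype.card (Fin (A j)) - 1) * (2 * c) :=
        abs_le_of_sum_eq_zero_of_neg_le (g.sum_f_sub hπ j v) (hlower j v) b
    _ ≤ (Amax A - 1) * (2 * c) := by
        rw [Fintype.card_fin]
        gcongr
        exact card_le_Amax A j
    _ = 2 * (Amax A - 1) * g.displacementLip * ‖π - π'‖ := by ring

end Displacement

end SG

open SG in
theorem approxFixedPt_of_stopping_general {n S : ℕ} {A : Fin n → ℕ} (g : SG n S A)
    (i : Fin n) (s : Fin S) {δ : ℝ} {π : Profile n S A} (hπ : IsProfile π)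
    (h : ∀ a : Fin (A i), ∃ πa : Profile n S A, IsProfile πa ∧
      (∀ j v b, |π j v b - πa j v b| ≤ δ) ∧
      ∀ j v b, g.f πa i s a - πa i s a ≤ g.f πa j v b - πa j v b)
    (j : Fin n) (v : Fin S) (b : Fin (A j)) :
    |g.f π j v b - π j v b| ≤
      (Amax A : ℝ) ^ 2 *
        (9 * (n : ℝ) * (S : ℝ) ^ 2 * (Amax A : ℝ) ^ 2 * g.Rmax / (1 - g.γ) ^ 2 + 1) * δ := by
  obtain ⟨a, ha⟩ := g.exists_le_f hπ i s
  obtain ⟨πa, hπa, hdist, hmin⟩ := h a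
  have hδ : 0 ≤ δ := (abs_nonneg _).trans (hdist i s a)
  have hnear : ‖π - πa‖ ≤ δ := (norm_profile_le_iff hδ).2 hdist
  have hL := g.displacementLip_nonneg hπ i s
  calc |g.f π j v b - π j v b| ≤ ‖g.f π - π‖ := abs_apply_le_norm_profile (g.f π - π) j v b
    _ ≤ 2 * (Amax A - 1) * g.displacementLip * ‖π - πa‖ :=
        g.norm_displacement_le_of_minimal hπ hπa ha hmin
    _ ≤ (Amax A : ℝ) ^ 2 * g.displacementLip * δ := by
        gcongr
        nlinarith [sq_nonneg ((Amax A : ℝ) - 1)]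
    _ ≤ _ := by
        gcongr
        exact g.displacementLip_le hπ i s

open SG in
/-- if near `π` every action `a` of agent `i` at state `s` admits a
profile `π_a` (within `1/d`) on which `f` does not increase the coordinate `(i,s,a)`
and this coordinate minimizes the displacement of `f`, then `π` is an
`A_max²(λ+1)/d`-approximate fixed point of `f`, where `λ = 9nS²A_max²R_max/(1−γ)²`. -/
theorem approxFixedPt_of_stopping {n S : ℕ} {A : Fin n → ℕ} (g : SG n S A)
    (d : ℕ) (hd : 0 < d) (i : Fin n) (s : Fin S)
    (π : Profile n S A) (hπ : IsProfile π)
    (h : ∀ a : Fin (A i), ∃ πa : Profile n S A, IsProfile πa ∧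
      (∀ j v b, |π j v b - πa j v b| ≤ 1 / (d : ℝ)) ∧
      g.f πa i s a ≤ πa i s a ∧
      (∀ (j : Fin n) (v : Fin S) (b : Fin (A j)),
        g.f πa i s a - πa i s a ≤ g.f πa j v b - πa j v b)) :
    ∀ (j : Fin n) (v : Fin S) (b : Fin (A j)),
      |g.f π j v b - π j v b| ≤
        (Amax A : ℝ) ^ 2 *
          (9 * (n : ℝ) * (S : ℝ) ^ 2 * (Amax A : ℝ) ^ 2 * g.Rmax / (1 - g.γ) ^ 2 + 1)
          / (d : ℝ) := by
  simpa only [mul_one_div] using approxFixedPt_of_stopping_general g i s (δ := 1 / d) hπ fun a ↦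
    (h a).imp fun _ ⟨hπa, hdist, _, hmin⟩ ↦ ⟨hπa, hdist, hmin⟩
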